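/- Let D ⊊ ℂ be a nonempty open simply connected domain, let w ∈ D, and let f be a holomorphic bijection from the open unit disc 𝔻 = {z ∈ ℂ : |z| < 1} onto D with f(0) = w and f'(0) = c a positive real number (so c = CR(w,D) is the conformal radius). Then: (i) dist(w, ∂D) ≤ c; (ii) c ≤ 4·dist(w, ∂D); and (iii) for any r > 0, if D ⊆ {z : |z − w| < r} then c ≤ r. In other words, dist(w,∂D) ≤ CR(w,D) ≤ min(4·dist(w,∂D), rad(w,D)), where rad(w,D) = inf{r : D ⊆ B(w,r)}. -/

import Mathlib

open Metric Set

/-!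
The lower bound and the bound by the out-radius are the Schwarz lemma for `f⁻¹` and for `f`.

For `c ≤ 4 dist(w, ∂D)`, which is Koebe's quarter theorem, fix `y ∉ D` and let `q` be a holomorphic
square root of `f - y`. As `f` is injective, `q z ≠ -q w` for all `z, w`, so
`φ = (q - q 0) / (q + q 0)` is injective with `φ 0 = 0` and `φ z * φ w ≠ 1`; since
`φ' 0 = f' 0 / (4 (f 0 - y))`, it suffices that `|φ' 0| ≤ 1`. This is an area comparison for the
measure `|dz|² / |z|²`, which is invariant under inversion. By Jensen's inequality, and because
`z φ' / φ` has mean value `1` on circles, `φ` does not decrease the measure of an annulus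
`A = {e < |z| < 1}`. On the other hand `φ(A)` and `1 / φ(A)` are disjoint, and both lie in
`{m < |z| < 1 / m}` as soon as `φ` covers the disc of radius `m` already on `{|z| ≤ e}`. Hence
`2 log (1 / e) ≤ 2 log (1 / m)`, and for small `e` one can take any `m < |φ' 0| e`.
-/

section

open Filter Topology Function MeasureTheory
open scoped Real ENNReal Pointwise

section InverseFunction

variable {U : Set ℂ} {f : ℂ → ℂ} {z : ℂ}

lemma nhds_le_map_nhds_of_injOn (hU : IsOpen U) (hf : DifferentiableOn ℂ f U) (hinj : InjOn f U)
    (hz : z ∈ U) : 𝓝 (f z) ≤ map f (𝓝 z) := by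
  refine (hf.analyticAt (hU.mem_nhds hz)).eventually_constant_or_nhds_le_map_nhds.resolve_left
    fun hconst ↦ ?_
  obtain ⟨x, hxz, hfx, hxU⟩ := ((eventually_mem_nhdsWithin (a := z) (s := {z}ᶜ)).and
    ((hconst.and (hU.mem_nhds hz)).filter_mono nhdsWithin_le_nhds)).exists
  exact hxz (hinj hxU hz hfx)

lemma eventually_deriv_ne_zero_of_injOn (hU : IsOpen U) (hf : DifferentiableOn ℂ f U)
    (hinj : InjOn f U) (hz : z ∈ U) : ∀ᶠ x in 𝓝[≠] z, deriv f x ≠ 0 := by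
  refine (hf.analyticAt (hU.mem_nhds hz)).deriv.eventually_eq_zero_or_eventually_ne_zero
    |>.resolve_left fun hzero ↦ ?_
  obtain ⟨ε, hε, hball⟩ := Metric.eventually_nhds_iff_ball.1 (hzero.and (hU.mem_nhds hz))
  have hconst : ∀ x ∈ ball z ε, f x = f z := fun x hx ↦
    isOpen_ball.is_const_of_deriv_eq_zero (convex_ball z ε).isPreconnected
      (hf.mono fun x hx ↦ (hball x hx).2) (fun x hx ↦ (hball x hx).1) hx (mem_ball_self hε)
  obtain ⟨x, hxz, hx⟩ := ((eventually_mem_nhdsWithin (a := z) (s := {z}ᶜ)).and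
    (mem_nhdsWithin_of_mem_nhds (ball_mem_nhds z hε))).exists
  exact hxz (hinj (hball x hx).2 hz (hconst x hx))

lemma continuousAt_invFunOn_of_injOn (hU : IsOpen U) (hf : DifferentiableOn ℂ f U)
    (hinj : InjOn f U) (hz : z ∈ U) : ContinuousAt (invFunOn f U) (f z) := by
  have hleft : invFunOn f U ∘ f =ᶠ[𝓝 z] id := by
    filter_upwards [hU.mem_nhds hz] with x hx using hinj.leftInvOn_invFunOn hx
  calc map (invFunOn f U) (𝓝 (f z))
      ≤ map (invFunOn f U ∘ f) (𝓝 z) := by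
        rw [← map_map]; exact map_mono (nhds_le_map_nhds_of_injOn hU hf hinj hz)
    _ = 𝓝 (invFunOn f U (f z)) := by
        rw [map_congr hleft, map_id, hinj.leftInvOn_invFunOn hz]

lemma differentiableAt_invFunOn_of_deriv_ne_zero (hU : IsOpen U) (hf : DifferentiableOn ℂ f U)
    (hinj : InjOn f U) (hz : z ∈ U) (hderiv : deriv f z ≠ 0) :
    DifferentiableAt ℂ (invFunOn f U) (f z) := by
  have hfz : HasDerivAt f (deriv f z) (invFunOn f U (f z)) := by
    rw [hinj.leftInvOn_invFunOn hz]
    exact (hf.differentiableAt (hU.mem_nhds hz)).hasDerivAt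
  have himage : f '' U ∈ 𝓝 (f z) :=
    nhds_le_map_nhds_of_injOn hU hf hinj hz (image_mem_map (hU.mem_nhds hz))
  exact (hfz.of_local_left_inverse (continuousAt_invFunOn_of_injOn hU hf hinj hz) hderiv
    (by filter_upwards [himage] with y hy using invFunOn_eq hy)).differentiableAt

/- The critical points of `f` are isolated, and the inverse is continuous at their images, so they
are removable singularities of the inverse. -/
lemma differentiableAt_invFunOn_of_injOn (hU : IsOpen U) (hf : DifferentiableOn ℂ f U)
    (hinj : InjOn f U) (hz : z ∈ U) : DifferentiableAt ℂ (invFunOn f U) (f z) := by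
  refine (Complex.analyticAt_of_differentiable_on_punctured_nhds_of_continuousAt ?_
    (continuousAt_invFunOn_of_injOn hU hf hinj hz)).differentiableAt
  have hdiff : ∀ᶠ x in 𝓝 z, f x ≠ f z → DifferentiableAt ℂ (invFunOn f U) (f x) := by
    filter_upwards [hU.mem_nhds hz,
      eventually_nhdsWithin_iff.1 (eventually_deriv_ne_zero_of_injOn hU hf hinj hz)]
      with x hx hderiv hne
    exact differentiableAt_invFunOn_of_deriv_ne_zero hU hf hinj hx (hderiv (ne_of_apply_ne f hne))
  exact eventually_nhdsWithin_iff.2 (nhds_le_map_nhds_of_injOn hU hf hinj hz hdiff)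

lemma deriv_invFunOn_mul_deriv (hU : IsOpen U) (hf : DifferentiableOn ℂ f U) (hinj : InjOn f U)
    (hz : z ∈ U) : deriv (invFunOn f U) (f z) * deriv f z = 1 := by
  have hleft : invFunOn f U ∘ f =ᶠ[𝓝 z] id := by
    filter_upwards [hU.mem_nhds hz] with x hx using hinj.leftInvOn_invFunOn hx
  rw [← deriv_comp z (differentiableAt_invFunOn_of_injOn hU hf hinj hz)
    (hf.differentiableAt (hU.mem_nhds hz)), hleft.deriv_eq, deriv_id]

lemma deriv_ne_zero_of_injOn (hU : IsOpen U) (hf : DifferentiableOn ℂ f U) (hinj : InjOn f U)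
    (hz : z ∈ U) : deriv f z ≠ 0 :=
  right_ne_zero_of_mul_eq_one (deriv_invFunOn_mul_deriv hU hf hinj hz)

end InverseFunction

lemma le_mul_norm_deriv_of_ball_subset_image {f : ℂ → ℂ} {c : ℂ} {R r : ℝ} (hR : 0 < R)
    (hf : DifferentiableOn ℂ f (ball c R)) (hinj : InjOn f (ball c R))
    (hr : ball (f c) r ⊆ f '' ball c R) : r ≤ R * ‖deriv f c‖ := by
  rcases le_or_gt r 0 with hr0 | hr0
  · exact hr0.trans (by positivity)
  have hc : c ∈ ball c R := mem_ball_self hR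
  have hinv : DifferentiableOn ℂ (invFunOn f (ball c R)) (ball (f c) r) := by
    intro y hy
    obtain ⟨z, hz, rfl⟩ := hr hy
    exact (differentiableAt_invFunOn_of_injOn isOpen_ball hf hinj hz).differentiableWithinAt
  have hmaps : MapsTo (invFunOn f (ball c R)) (ball (f c) r)
      (closedBall (invFunOn f (ball c R) (f c)) R) := by
    intro y hy
    rw [hinj.leftInvOn_invFunOn hc]
    exact ball_subset_closedBall (invFunOn_mem (hr hy))
  have hschwarz := Complex.norm_deriv_le_div_of_mapsTo_ball hinv hmaps hr0
  have hmul := deriv_invFunOn_mul_deriv isOpen_ball hf hinj hc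
  calc r = r * ‖deriv (invFunOn f (ball c R)) (f c) * deriv f c‖ := by rw [hmul, norm_one, mul_one]
    _ ≤ r * (R / r * ‖deriv f c‖) := by rw [norm_mul]; gcongr
    _ = R * ‖deriv f c‖ := by field_simp

lemma eventually_surjOn_closedBall {𝕜 : Type*} [NontriviallyNormedField 𝕜]
    [CompleteSpace 𝕜] {f : 𝕜 → 𝕜} {f' z : 𝕜} {k : ℝ} (hf : HasStrictDerivAt f f' z)
    (hk : k < ‖f'‖) :
    ∀ᶠ ε in 𝓝[>] (0 : ℝ), SurjOn f (closedBall z ε) (closedBall (f z) (k * ε)) := by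
  rcases lt_or_ge k 0 with hk0 | hk0
  · filter_upwards [self_mem_nhdsWithin] with ε hε
    rw [closedBall_eq_empty.2 (mul_neg_of_neg_of_pos hk0 hε)]
    exact surjOn_empty f _
  have hf' : f' ≠ 0 := norm_pos_iff.1 (hk0.trans_lt hk)
  let divRight : (ContinuousLinearMap.toSpanSingleton 𝕜 f').NonlinearRightInverse :=
    { toFun := fun y ↦ y / f'
      nnnorm := ‖f'‖₊⁻¹
      bound' := fun y ↦ by simp [div_eq_inv_mul]
      right_inv' := fun y ↦ by simp [hf'] }
  obtain ⟨s, hs, happrox⟩ := hf.hasStrictFDerivAt.approximates_deriv_on_nhds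
    (c := (‖f'‖ - k).toNNReal) (Or.inr (by simpa using hk))
  obtain ⟨δ, hδ, hball⟩ := nhds_basis_closedBall.mem_iff.1 hs
  filter_upwards [Ioc_mem_nhdsGT hδ] with ε hε
  have hsurj := happrox.surjOn_closedBall_of_nonlinearRightInverse divRight hε.1.le
    ((closedBall_subset_closedBall hε.2).trans hball)
  simpa [divRight, hk.le] using hsurj

lemma exists_differentiableOn_pow_eq {U : Set ℂ} (hUc : IsSimplyConnected U) (hU : IsOpen U)
    {f : ℂ → ℂ} (hf : DifferentiableOn ℂ f U) (hf0 : ∀ z ∈ U, f z ≠ 0) {n : ℕ} (hn : n ≠ 0) :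
    ∃ q : ℂ → ℂ, DifferentiableOn ℂ q U ∧ ∀ z, q z ^ n = f z := by
  obtain ⟨q, hqc, hq⟩ := Complex.exists_continuousOn_pow_eq hUc hU hf.continuousOn
    (by rintro ⟨z, hz, h0⟩; exact hf0 z hz h0) hn
  refine ⟨q, fun z hz ↦ ?_, hq⟩
  have hqz : q z ≠ 0 := by
    intro h0
    exact hf0 z hz (by rw [← hq, h0, zero_pow hn])
  refine (HasDerivAt.of_comp_left (hqc.continuousAt (hU.mem_nhds hz)) (hasDerivAt_pow n (q z))
    (hf.differentiableAt (hU.mem_nhds hz)).hasDerivAt ?_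
    (.of_forall hq)).differentiableAt.differentiableWithinAt
  simp [hn, hqz]

lemma isSimplyConnected_ball {E : Type*} [NormedAddCommGroup E] [NormedSpace ℝ E] (c : E)
    {R : ℝ} (hR : 0 < R) : IsSimplyConnected (ball c R) := by
  have := (convex_ball c R).contractibleSpace ⟨c, mem_ball_self hR⟩
  exact SimplyConnectedSpace.ofContractible _

section CircleMean

lemma setLIntegral_norm_preimage {s : Set ℝ} (hs : MeasurableSet s) (hs0 : s ⊆ Ioi 0)
    {F : ℂ → ℝ≥0∞} (hF : ContinuousOn F (norm ⁻¹' s)) :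
    ∫⁻ z in norm ⁻¹' s, F z =
      ∫⁻ r in s, ENNReal.ofReal r * ∫⁻ θ in Ioo (-π) π, F (circleMap 0 r θ) := by
  classical
  have hA : MeasurableSet (norm ⁻¹' s : Set ℂ) := measurable_norm hs
  have hmeas : Measurable ((norm ⁻¹' s).indicator F) := by
    rw [← piecewise_eq_indicator]
    exact hF.measurable_piecewise continuousOn_const hA
  have hcircle (p : ℝ × ℝ) : Complex.polarCoord.symm p = circleMap 0 p.1 p.2 := by
    simp [Complex.polarCoord_symm_apply, circleMap, Complex.exp_mul_I]
  have hindicator {r : ℝ} (hr : 0 < r) (θ : ℝ) :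
      (norm ⁻¹' s).indicator F (circleMap 0 r θ) =
        s.indicator (fun r ↦ F (circleMap 0 r θ)) r := by
    simp [indicator, abs_of_pos hr]
  calc ∫⁻ z in norm ⁻¹' s, F z
      = ∫⁻ p in Ioi (0 : ℝ) ×ˢ Ioo (-π) π,
          ENNReal.ofReal p.1 * (norm ⁻¹' s).indicator F (circleMap 0 p.1 p.2) := by
        simp only [← hcircle]
        rw [← lintegral_indicator hA, ← Complex.lintegral_comp_polarCoord_symm]; rfl
    _ = ∫⁻ r in Ioi (0 : ℝ), ∫⁻ θ in Ioo (-π) π,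
          ENNReal.ofReal r * (norm ⁻¹' s).indicator F (circleMap 0 r θ) := by
        rw [Measure.volume_eq_prod, setLIntegral_prod _ (by unfold circleMap; fun_prop)]
    _ = ∫⁻ r in Ioi (0 : ℝ), s.indicator
          (fun r ↦ ENNReal.ofReal r * ∫⁻ θ in Ioo (-π) π, F (circleMap 0 r θ)) r := by
        refine setLIntegral_congr_fun measurableSet_Ioi fun r hr ↦ ?_
        simp only [lintegral_const_mul' _ _ ENNReal.ofReal_ne_top, hindicator hr]
        by_cases hrs : r ∈ s <;> simp [hrs]
    _ = _ := by rw [setLIntegral_indicator hs, inter_eq_left.2 hs0]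

lemma setLIntegral_circleMap_eq_circleAverage {u : ℂ → ℝ} {c : ℂ} {r : ℝ}
    (hu : CircleIntegrable u c r) (hu0 : ∀ z, 0 ≤ u z) :
    ∫⁻ θ in Ioo (-π) π, ENNReal.ofReal (u (circleMap c r θ)) =
      ENNReal.ofReal (2 * π * Real.circleAverage u c r) := by
  have hperiodic : Periodic (fun θ ↦ u (circleMap c r θ)) (2 * π) :=
    (periodic_circleMap c r).comp u
  have hpi : -π + 2 * π = π := by ring
  have hle : -π ≤ π := by linarith [Real.pi_pos]
  have hshift := hperiodic.intervalIntegral_add_eq (-π) 0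
  have hint : IntervalIntegrable (fun θ ↦ u (circleMap c r θ)) volume (-π) π :=
    hperiodic.intervalIntegrable₀ Real.two_pi_pos.ne' hu _ _
  rw [hpi, zero_add] at hshift
  rw [Real.circleAverage_def, ← hshift, intervalIntegral.integral_of_le hle,
    integral_Ioc_eq_integral_Ioo, smul_eq_mul, mul_inv_cancel_left₀ Real.two_pi_pos.ne',
    ofReal_integral_eq_lintegral_ofReal (hint.1.mono_set Ioo_subset_Ioc_self)
      (.of_forall fun θ ↦ hu0 _)]

lemma norm_pow_le_circleAverage {E : Type*} [NormedAddCommGroup E] [NormedSpace ℂ E]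
    [CompleteSpace E] {g : ℂ → E} {c : ℂ} {r : ℝ} (hr : r ≠ 0)
    (hg : DiffContOnCl ℂ g (ball c |r|)) (n : ℕ) :
    ‖g c‖ ^ n ≤ Real.circleAverage (fun z ↦ ‖g z‖ ^ n) c r := by
  have hcont : Continuous fun θ ↦ g (circleMap c r θ) := by
    refine hg.continuousOn.comp_continuous (continuous_circleMap c r) fun θ ↦ ?_
    rw [closure_ball _ (abs_ne_zero.2 hr)]
    exact sphere_subset_closedBall (circleMap_mem_sphere' c r θ)
  have hconv : ConvexOn ℝ univ fun x : E ↦ ‖x‖ ^ n :=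
    (convexOn_univ_norm (E := E)).pow (fun x _ ↦ norm_nonneg x) n
  have hne : NeZero (volume.restrict (uIoc 0 (2 * π))) := by
    simp [neZero_iff, Measure.restrict_eq_zero, uIoc_of_le Real.two_pi_pos.le, Real.pi_pos]
  have hfin : IsFiniteMeasure (volume.restrict (uIoc 0 (2 * π))) := by
    rw [uIoc_of_le Real.two_pi_pos.le]; infer_instance
  rw [← hg.circleAverage, Real.circleAverage_eq_intervalAverage,
    Real.circleAverage_eq_intervalAverage]
  exact hconv.map_average_le (by fun_prop) isClosed_univ (by simp)
    (hcont.intervalIntegrable _ _).def' ((hcont.norm.pow n).intervalIntegrable _ _).def'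

end CircleMean

section LogArea

/-- The measure `|dz|² / |z|²` on `ℂ`, that is, the area measure in the coordinate `log z`. -/
noncomputable def logArea : Measure ℂ :=
  volume.withDensity fun z ↦ (‖z‖ₑ ^ 2)⁻¹

lemma setLIntegral_logArea {s : Set ℂ} (hs : MeasurableSet s) (hs0 : 0 ∉ s) (F : ℂ → ℝ≥0∞) :
    ∫⁻ z in s, F z ∂logArea = ∫⁻ z in s, (‖z‖ₑ ^ 2)⁻¹ * F z := by
  refine setLIntegral_withDensity_eq_setLIntegral_mul_non_measurable _ (by fun_prop) F hs ?_
  filter_upwards [ae_restrict_mem hs] with z hz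
  simpa [pow_pos_iff, pos_iff_ne_zero] using ne_of_mem_of_not_mem hz hs0

lemma logArea_image {f : ℂ → ℂ} {s : Set ℂ} (hs : MeasurableSet s) (hs0 : 0 ∉ s)
    (hf : ∀ z ∈ s, DifferentiableAt ℂ f z) (hinj : InjOn f s) (hf0 : ∀ z ∈ s, f z ≠ 0) :
    logArea (f '' s) = ∫⁻ z in s, ‖z * logDeriv f z‖ₑ ^ 2 ∂logArea := by
  have hderiv : ∀ z ∈ s, HasFDerivWithinAt f
      ((ContinuousLinearMap.toSpanSingleton ℂ (deriv f z)).restrictScalars ℝ) s z := fun z hz ↦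
    ((hf z hz).hasDerivAt.hasFDerivAt.restrictScalars ℝ).hasFDerivWithinAt
  have hdet (z : ℂ) :
      ((ContinuousLinearMap.toSpanSingleton ℂ (deriv f z)).restrictScalars ℝ).det =
        ‖deriv f z‖ ^ 2 := by
    simp [ContinuousLinearMap.det, LinearMap.det_restrictScalars, Algebra.norm_complex_eq,
      Complex.normSq_eq_norm_sq]
  rw [logArea, withDensity_apply', ← logArea, setLIntegral_logArea hs hs0,
    lintegral_image_eq_lintegral_abs_det_fderiv_mul volume hs hderiv hinj]
  refine setLIntegral_congr_fun hs fun z hz ↦ ?_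
  have hz0 : ‖z‖ₑ ≠ 0 := by simpa using ne_of_mem_of_not_mem hz hs0
  have hcancel : (‖z‖ₑ ^ 2)⁻¹ * ‖z‖ₑ ^ 2 = 1 := ENNReal.inv_mul_cancel (by simp [hz0]) (by simp)
  rw [hdet, abs_of_nonneg (sq_nonneg _), ENNReal.ofReal_pow (norm_nonneg _), ofReal_norm,
    logDeriv_apply, div_eq_mul_inv, enorm_mul, enorm_mul, enorm_inv (hf0 z hz), mul_pow, mul_pow,
    ← mul_assoc, hcancel, one_mul, ENNReal.inv_pow]

lemma logArea_inv {s : Set ℂ} (hs : MeasurableSet s) (hs0 : 0 ∉ s) :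
    logArea s⁻¹ = logArea s := by
  have hne : ∀ z ∈ s, z ≠ 0 := fun z hz ↦ ne_of_mem_of_not_mem hz hs0
  rw [← image_inv_eq_inv, logArea_image hs hs0 (fun z hz ↦ differentiableAt_inv (hne z hz))
    inv_injective.injOn fun z hz ↦ inv_ne_zero (hne z hz)]
  calc ∫⁻ z in s, ‖z * logDeriv (·⁻¹) z‖ₑ ^ 2 ∂logArea = ∫⁻ _ in s, 1 ∂logArea := by
        refine setLIntegral_congr_fun hs fun z hz ↦ ?_
        simp [logDeriv_inv, mul_div_cancel₀, hne z hz]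
    _ = logArea s := setLIntegral_one s

lemma setLIntegral_logArea_norm_preimage {s : Set ℝ} (hs : MeasurableSet s) (hs0 : s ⊆ Ioi 0)
    {F : ℂ → ℝ≥0∞} (hF : ContinuousOn F (norm ⁻¹' s)) :
    ∫⁻ z in norm ⁻¹' s, F z ∂logArea =
      ∫⁻ r in s, ENNReal.ofReal r⁻¹ * ∫⁻ θ in Ioo (-π) π, F (circleMap 0 r θ) := by
  have hcont : ContinuousOn (fun z : ℂ ↦ (‖z‖ₑ ^ 2)⁻¹ * F z) (norm ⁻¹' s) := by
    refine ContinuousOn.ennreal_mul (by fun_prop) hF (fun z _ ↦ .inl (by simp)) fun z hz ↦ .inr ?_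
    simpa using norm_pos_iff.1 (hs0 hz)
  rw [setLIntegral_logArea (measurable_norm hs) (fun h ↦ by simpa using hs0 h),
    setLIntegral_norm_preimage hs hs0 hcont]
  refine setLIntegral_congr_fun hs fun r hr ↦ ?_
  have hr0 : 0 < r := hs0 hr
  have hdensity (θ : ℝ) : (‖circleMap 0 r θ‖ₑ ^ 2)⁻¹ = ENNReal.ofReal (r ^ 2)⁻¹ := by
    rw [← ofReal_norm, norm_circleMap_zero, abs_of_pos hr0, ← ENNReal.ofReal_pow hr0.le,
      ENNReal.ofReal_inv_of_pos (by positivity)]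
  simp only [hdensity, lintegral_const_mul' _ _ ENNReal.ofReal_ne_top]
  rw [← mul_assoc, ← ENNReal.ofReal_mul hr0.le]
  congr 2
  field_simp

lemma logArea_norm_preimage {s : Set ℝ} (hs : MeasurableSet s) (hs0 : s ⊆ Ioi 0) :
    logArea (norm ⁻¹' s) = ∫⁻ r in s, ENNReal.ofReal r⁻¹ * ENNReal.ofReal (2 * π) := by
  rw [← setLIntegral_one, setLIntegral_logArea_norm_preimage hs hs0 continuousOn_const]
  simp [two_mul]

lemma logArea_norm_preimage_Ioo {a b : ℝ} (ha : 0 < a) (hab : a ≤ b) :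
    logArea (norm ⁻¹' Ioo a b) = ENNReal.ofReal (2 * π * Real.log (b / a)) := by
  have hpos : ∀ r ∈ Ioo a b, 0 < r := fun r hr ↦ ha.trans hr.1
  have hint : IntervalIntegrable (fun r : ℝ ↦ r⁻¹) volume a b := by
    simp [intervalIntegrable_inv_iff, uIcc_of_le hab, ha.not_ge]
  rw [logArea_norm_preimage measurableSet_Ioo hpos, lintegral_mul_const' _ _ ENNReal.ofReal_ne_top,
    ← ofReal_integral_eq_lintegral_ofReal (hint.1.mono_set Ioo_subset_Ioc_self)
      ((ae_restrict_mem measurableSet_Ioo).mono fun r hr ↦ inv_nonneg.2 (hpos r hr).le),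
    ← integral_Ioc_eq_integral_Ioo, ← intervalIntegral.integral_of_le hab,
    integral_inv_of_pos ha (ha.trans_le hab), mul_comm, ENNReal.ofReal_mul Real.two_pi_pos.le]

end LogArea

section LogAreaMonotone

variable {f : ℂ → ℂ} {R r : ℝ}

lemma one_le_circleAverage_norm_mul_logDeriv_sq (hf : DifferentiableOn ℂ f (ball 0 R))
    (hf0 : f 0 = 0) (hf'0 : deriv f 0 ≠ 0) (hne : ∀ z ∈ ball 0 R, z ≠ 0 → f z ≠ 0) (hr : 0 < r)
    (hrR : r < R) : 1 ≤ Real.circleAverage (fun z ↦ ‖z * logDeriv f z‖ ^ 2) 0 r := by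
  have h0 : (0 : ℂ) ∈ ball 0 R := mem_ball_self (hr.trans hrR)
  have hslope : DifferentiableOn ℂ (dslope f 0) (ball 0 R) :=
    (Complex.differentiableOn_dslope (isOpen_ball.mem_nhds h0)).2 hf
  have hfactor : f = fun z ↦ z * dslope f 0 z := by
    ext z; simpa [hf0] using (sub_smul_dslope f 0 z).symm
  have hslope_ne : ∀ z ∈ ball 0 R, dslope f 0 z ≠ 0 := by
    intro z hz h
    rcases eq_or_ne z 0 with rfl | hz0
    · exact hf'0 (by simpa using h)
    · exact hne z hz hz0 (by rw [hfactor]; simp [h])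
  let G : ℂ → ℂ := fun z ↦ 1 + z * logDeriv (dslope f 0) z
  have hG : DifferentiableOn ℂ G (ball 0 R) :=
    (differentiableOn_id.mul ((hslope.deriv isOpen_ball).div hslope hslope_ne)).const_add 1
  have hGf : EqOn G (fun z ↦ z * logDeriv f z) (sphere 0 |r|) := by
    intro z hz
    have hz0 : z ≠ 0 := ne_of_mem_sphere hz (abs_pos.2 hr.ne').ne'
    have hzR : z ∈ ball 0 R := sphere_subset_ball (by rwa [abs_of_pos hr]) hz
    have hlog : logDeriv f z = logDeriv id z + logDeriv (dslope f 0) z := by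
      conv_lhs => rw [hfactor]
      exact logDeriv_mul z hz0 (hslope_ne z hzR) differentiableAt_id
        (hslope.differentiableAt (isOpen_ball.mem_nhds hzR))
    simp [G, hlog, mul_add, hz0]
  have hcl : DiffContOnCl ℂ G (ball 0 |r|) := by
    refine (hG.mono ?_).diffContOnCl
    rw [abs_of_pos hr]
    exact closure_ball_subset_closedBall.trans (closedBall_subset_ball hrR)
  calc (1 : ℝ) = ‖G 0‖ ^ 2 := by simp [G]
    _ ≤ Real.circleAverage (fun z ↦ ‖G z‖ ^ 2) 0 r := norm_pow_le_circleAverage hr.ne' hcl 2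
    _ = Real.circleAverage (fun z ↦ ‖z * logDeriv f z‖ ^ 2) 0 r :=
        Real.circleAverage_congr_sphere fun z hz ↦ by simp only [hGf hz]

lemma ofReal_two_pi_le_setLIntegral_enorm_mul_logDeriv_sq (hf : DifferentiableOn ℂ f (ball 0 R))
    (hf0 : f 0 = 0) (hf'0 : deriv f 0 ≠ 0) (hne : ∀ z ∈ ball 0 R, z ≠ 0 → f z ≠ 0) (hr : 0 < r)
    (hrR : r < R) :
    ENNReal.ofReal (2 * π) ≤
      ∫⁻ θ in Ioo (-π) π, ‖circleMap 0 r θ * logDeriv f (circleMap 0 r θ)‖ₑ ^ 2 := by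
  have hball : sphere (0 : ℂ) |r| ⊆ ball 0 R := sphere_subset_ball (by rwa [abs_of_pos hr])
  have hcont : ContinuousOn (fun z ↦ z * logDeriv f z) (sphere 0 |r|) :=
    continuousOn_id.mul (((hf.deriv isOpen_ball).continuousOn.mono hball).div
      (hf.continuousOn.mono hball)
      fun z hz ↦ hne z (hball hz) (ne_of_mem_sphere hz (abs_pos.2 hr.ne').ne'))
  have hmean := one_le_circleAverage_norm_mul_logDeriv_sq hf hf0 hf'0 hne hr hrR
  calc ENNReal.ofReal (2 * π)
      ≤ ENNReal.ofReal (2 * π * Real.circleAverage (fun z ↦ ‖z * logDeriv f z‖ ^ 2) 0 r) :=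
        ENNReal.ofReal_le_ofReal (le_mul_of_one_le_right Real.two_pi_pos.le hmean)
    _ = ∫⁻ θ in Ioo (-π) π,
          ENNReal.ofReal (‖circleMap 0 r θ * logDeriv f (circleMap 0 r θ)‖ ^ 2) :=
        (setLIntegral_circleMap_eq_circleAverage
          (hcont.norm.pow 2).circleIntegrable' fun z ↦ sq_nonneg _).symm
    _ = _ := by simp only [ENNReal.ofReal_pow (norm_nonneg _), ofReal_norm]

lemma logArea_norm_preimage_le_image {s : Set ℝ} (hs : MeasurableSet s) (hsR : s ⊆ Ioo 0 R)
    (hf : DifferentiableOn ℂ f (ball 0 R)) (hinj : InjOn f (ball 0 R)) (hf0 : f 0 = 0) :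
    logArea (norm ⁻¹' s) ≤ logArea (f '' (norm ⁻¹' s)) := by
  rcases s.eq_empty_or_nonempty with rfl | ⟨r₀, hr₀⟩
  · simp
  have h0 : (0 : ℂ) ∈ ball 0 R := mem_ball_self ((hsR hr₀).1.trans (hsR hr₀).2)
  have hball : norm ⁻¹' s ⊆ ball (0 : ℂ) R := fun z hz ↦ mem_ball_zero_iff.2 (hsR hz).2
  have hne : ∀ z ∈ ball 0 R, z ≠ 0 → f z ≠ 0 := fun z hz hz0 h ↦
    hz0 (hinj hz h0 (h.trans hf0.symm))
  have hz0 : ∀ z ∈ (norm ⁻¹' s : Set ℂ), z ≠ 0 := fun z hz ↦ norm_pos_iff.1 (hsR hz).1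
  have hcont : ContinuousOn (fun z ↦ z * logDeriv f z) (norm ⁻¹' s) :=
    continuousOn_id.mul (((hf.deriv isOpen_ball).continuousOn.mono hball).div
      (hf.continuousOn.mono hball) fun z hz ↦ hne z (hball hz) (hz0 z hz))
  rw [logArea_norm_preimage hs fun r hr ↦ (hsR hr).1,
    logArea_image (measurable_norm hs) (fun h ↦ hz0 0 h rfl)
      (fun z hz ↦ hf.differentiableAt (isOpen_ball.mem_nhds (hball hz))) (hinj.mono hball)
      fun z hz ↦ hne z (hball hz) (hz0 z hz),
    setLIntegral_logArea_norm_preimage hs (fun r hr ↦ (hsR hr).1) (by fun_prop)]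
  exact setLIntegral_mono' hs fun r hr ↦ mul_le_mul_right
    (ofReal_two_pi_le_setLIntegral_enorm_mul_logDeriv_sq hf hf0
      (deriv_ne_zero_of_injOn isOpen_ball hf hinj h0) hne (hsR hr).1 (hsR hr).2) _

end LogAreaMonotone

section BieberbachEilenberg

variable {F : ℂ → ℂ}

lemma norm_mem_Ioo_inv_of_surjOn_closedBall {U V : Set ℂ} {m : ℝ} {z : ℂ} (hm : 0 < m)
    (hinj : InjOn F U) (hmul : ∀ z ∈ U, ∀ w ∈ U, F z * F w ≠ 1) (hVU : V ⊆ U)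
    (hsurj : SurjOn F V (closedBall 0 m)) (hz : z ∈ U \ V) : ‖F z‖ ∈ Ioo m m⁻¹ := by
  have hlarge : m < ‖F z‖ := by
    by_contra! hle
    obtain ⟨w, hw, hwz⟩ := hsurj (mem_closedBall_zero_iff.2 hle)
    exact hz.2 (hinj (hVU hw) hz.1 hwz ▸ hw)
  refine ⟨hlarge, ?_⟩
  by_contra! hle
  have hinv : ‖(F z)⁻¹‖ ≤ m := by
    rw [norm_inv]
    exact inv_le_of_inv_le₀ hm hle
  obtain ⟨w, hw, hwz⟩ := hsurj (mem_closedBall_zero_iff.2 hinv)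
  exact hmul z hz.1 w (hVU hw) (by rw [hwz, mul_inv_cancel₀ (norm_pos_iff.1 (hm.trans hlarge))])

lemma two_mul_logArea_le_of_mul_ne_one {m : ℝ} {s : Set ℂ} (hs : MeasurableSet s) (hm : 0 < m)
    (hsm : s ⊆ norm ⁻¹' Ioo m m⁻¹) (hmul : ∀ z ∈ s, ∀ w ∈ s, z * w ≠ 1) :
    2 * logArea s ≤ logArea (norm ⁻¹' Ioo m m⁻¹) := by
  have hne : ∀ z ∈ s, z ≠ 0 := fun z hz ↦ norm_pos_iff.1 (hm.trans (hsm hz).1)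
  have hdisj : Disjoint s s⁻¹ := by
    rw [Set.disjoint_left]
    exact fun z hz hzinv ↦ hmul z hz z⁻¹ hzinv (mul_inv_cancel₀ (hne z hz))
  have hinv : s⁻¹ ⊆ norm ⁻¹' Ioo m m⁻¹ := by
    intro z hz
    have hbounds := hsm hz
    rw [mem_preimage, norm_inv] at hbounds
    have hpos : 0 < ‖z‖ := inv_pos.1 (hm.trans hbounds.1)
    exact ⟨(inv_lt_inv₀ hpos hm).1 hbounds.2, (lt_inv_comm₀ hm hpos).1 hbounds.1⟩
  calc 2 * logArea s = logArea s + logArea s⁻¹ := by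
        rw [logArea_inv hs fun h ↦ hne 0 h rfl, two_mul]
    _ = logArea (s ∪ s⁻¹) := (measure_union hdisj hs.inv).symm
    _ ≤ logArea (norm ⁻¹' Ioo m m⁻¹) := measure_mono (union_subset hsm hinv)

lemma le_of_two_mul_logArea_annulus_le {e m : ℝ} (he : 0 < e) (he1 : e < 1) (hm : 0 < m)
    (hm1 : m < 1) (h : 2 * logArea (norm ⁻¹' Ioo e 1) ≤ logArea (norm ⁻¹' Ioo m m⁻¹)) :
    m ≤ e := by
  have hlog_e : Real.log e < 0 := Real.log_neg he he1
  have hlog_m : Real.log m < 0 := Real.log_neg hm hm1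
  have hlog_div : Real.log (m⁻¹ / m) = -(2 * Real.log m) := by
    rw [Real.log_div (inv_ne_zero hm.ne') hm.ne', Real.log_inv]; ring
  have hpi := Real.pi_pos
  rw [logArea_norm_preimage_Ioo he he1.le,
    logArea_norm_preimage_Ioo hm (hm1.le.trans (one_le_inv_iff₀.2 ⟨hm, hm1.le⟩)), one_div,
    Real.log_inv, hlog_div, ← ENNReal.ofReal_ofNat 2, ← ENNReal.ofReal_mul zero_le_two,
    ENNReal.ofReal_le_ofReal_iff (by nlinarith)] at h
  exact (Real.log_le_log_iff hm he).1 (by nlinarith)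

lemma radius_le_of_surjOn_closedBall_of_mul_ne_one {e m : ℝ}
    (hF : DifferentiableOn ℂ F (ball 0 1)) (hinj : InjOn F (ball 0 1)) (hF0 : F 0 = 0)
    (hmul : ∀ z ∈ ball 0 1, ∀ w ∈ ball 0 1, F z * F w ≠ 1) (he : 0 < e) (he1 : e < 1) (hm : 0 < m)
    (hsurj : SurjOn F (closedBall 0 e) (closedBall 0 m)) : m ≤ e := by
  have hball : closedBall (0 : ℂ) e ⊆ ball 0 1 := closedBall_subset_ball he1
  have hm1 : m < 1 := by
    by_contra! hle
    obtain ⟨z, hz, hz1⟩ := hsurj (mem_closedBall_zero_iff.2 (norm_one.trans_le hle))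
    exact hmul z (hball hz) z (hball hz) (by rw [hz1, one_mul])
  have hannulus : norm ⁻¹' Ioo e 1 ⊆ ball (0 : ℂ) 1 \ closedBall 0 e := fun z hz ↦ by
    simpa [and_comm] using hz
  have hsub : norm ⁻¹' Ioo e 1 ⊆ ball (0 : ℂ) 1 := hannulus.trans sdiff_subset
  have hA : MeasurableSet (norm ⁻¹' Ioo e 1 : Set ℂ) := measurable_norm measurableSet_Ioo
  have himage : F '' (norm ⁻¹' Ioo e 1) ⊆ norm ⁻¹' Ioo m m⁻¹ := by
    rintro _ ⟨z, hz, rfl⟩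
    exact norm_mem_Ioo_inv_of_surjOn_closedBall hm hinj hmul hball hsurj (hannulus hz)
  have hlower := logArea_norm_preimage_le_image measurableSet_Ioo (Ioo_subset_Ioo_left he.le)
    hF hinj hF0
  have hupper := two_mul_logArea_le_of_mul_ne_one
    (hA.image_of_continuousOn_injOn (hF.continuousOn.mono hsub) (hinj.mono hsub)) hm himage (by
      rintro _ ⟨z, hz, rfl⟩ _ ⟨w, hw, rfl⟩
      exact hmul z (hsub hz) w (hsub hw))
  exact le_of_two_mul_logArea_annulus_le he he1 hm hm1 ((mul_le_mul_right hlower 2).trans hupper)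

theorem norm_deriv_zero_le_one_of_mul_ne_one (hF : DifferentiableOn ℂ F (ball 0 1))
    (hinj : InjOn F (ball 0 1)) (hF0 : F 0 = 0)
    (hmul : ∀ z ∈ ball 0 1, ∀ w ∈ ball 0 1, F z * F w ≠ 1) : ‖deriv F 0‖ ≤ 1 := by
  by_contra! hlt
  obtain ⟨k, hk1, hk⟩ := exists_between hlt
  have hderiv : HasStrictDerivAt F (deriv F 0) 0 :=
    (hF.analyticAt (ball_mem_nhds 0 one_pos)).hasStrictDerivAt
  obtain ⟨e, hsurj, he, he1⟩ :=
    ((eventually_surjOn_closedBall hderiv hk).and (Ioo_mem_nhdsGT one_pos)).exists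
  rw [hF0] at hsurj
  have hle : k * e ≤ e := radius_le_of_surjOn_closedBall_of_mul_ne_one hF hinj hF0 hmul he he1
    (by positivity) hsurj
  exact hle.not_gt (lt_mul_of_one_lt_left he hk1)

end BieberbachEilenberg

section KoebeQuarter

variable {f q : ℂ → ℂ} {U : Set ℂ} {y : ℂ}

lemma add_ne_zero_of_injOn_sq (hinj : InjOn (fun z ↦ q z ^ 2) U) (hq : ∀ z ∈ U, q z ≠ 0) :
    ∀ z ∈ U, ∀ w ∈ U, q z + q w ≠ 0 := by
  intro z hz w hw h
  have hneg : q z = -q w := eq_neg_of_add_eq_zero_left h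
  obtain rfl : z = w := hinj hz hw (by simp [hneg])
  exact hq z hz (self_eq_neg.1 hneg)

lemma norm_deriv_zero_le_of_add_ne_zero (hq : DifferentiableOn ℂ q (ball 0 1))
    (hinj : InjOn q (ball 0 1)) (hadd : ∀ z ∈ ball 0 1, ∀ w ∈ ball 0 1, q z + q w ≠ 0) :
    ‖deriv q 0‖ ≤ 2 * ‖q 0‖ := by
  have h0 : (0 : ℂ) ∈ ball 0 1 := mem_ball_self one_pos
  have hq0 : q 0 ≠ 0 := fun h ↦ hadd 0 h0 0 h0 (by simp [h])
  have hden : ∀ z ∈ ball 0 1, q z + q 0 ≠ 0 := fun z hz ↦ hadd z hz 0 h0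
  let φ : ℂ → ℂ := fun z ↦ (q z - q 0) / (q z + q 0)
  have hφ : DifferentiableOn ℂ φ (ball 0 1) := (hq.sub_const _).div (hq.add_const _) hden
  have hφinj : InjOn φ (ball 0 1) := by
    intro z hz w hw h
    have hcross := (div_eq_div_iff (hden z hz) (hden w hw)).1 h
    exact hinj hz hw (mul_left_cancel₀ (mul_ne_zero two_ne_zero hq0) (by linear_combination hcross))
  have hφmul : ∀ z ∈ ball 0 1, ∀ w ∈ ball 0 1, φ z * φ w ≠ 1 := by
    intro z hz w hw h
    rw [div_mul_div_comm, div_eq_one_iff_eq (mul_ne_zero (hden z hz) (hden w hw))] at h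
    exact mul_ne_zero (mul_ne_zero two_ne_zero hq0) (hadd z hz w hw) (by linear_combination -h)
  have hφderiv : deriv φ 0 = deriv q 0 / (2 * q 0) := by
    have hq' := (hq.differentiableAt (isOpen_ball.mem_nhds h0)).hasDerivAt
    rw [((hq'.sub_const (q 0)).fun_div (hq'.add_const (q 0)) (hden 0 h0)).deriv]
    field_simp
    ring
  have hle := norm_deriv_zero_le_one_of_mul_ne_one hφ hφinj (by simp [φ]) hφmul
  rwa [hφderiv, norm_div, div_le_one (by simpa using hq0), norm_mul, Complex.norm_ofNat] at hle

theorem norm_deriv_zero_le_four_mul_dist (hf : DifferentiableOn ℂ f (ball 0 1))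
    (hinj : InjOn f (ball 0 1)) (hy : y ∉ f '' ball 0 1) :
    ‖deriv f 0‖ ≤ 4 * dist (f 0) y := by
  have h0 : (0 : ℂ) ∈ ball 0 1 := mem_ball_self one_pos
  have hne : ∀ z ∈ ball 0 1, f z - y ≠ 0 := fun z hz h ↦ hy ⟨z, hz, sub_eq_zero.1 h⟩
  obtain ⟨q, hq, hqf⟩ := exists_differentiableOn_pow_eq (isSimplyConnected_ball 0 one_pos)
    isOpen_ball (hf.sub_const y) hne two_ne_zero
  have hq0 : ∀ z ∈ ball 0 1, q z ≠ 0 := fun z hz h ↦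
    hne z hz (by rw [← hqf, h, zero_pow two_ne_zero])
  have hsqinj : InjOn (fun z ↦ q z ^ 2) (ball 0 1) := by
    intro z hz w hw h
    simp only [hqf, sub_left_inj] at h
    exact hinj hz hw h
  have hqinj : InjOn q (ball 0 1) := fun z hz w hw h ↦ hsqinj hz hw (by simp only [h])
  have hderiv : deriv f 0 = 2 * q 0 * deriv q 0 := by
    have hf_eq : f = fun z ↦ q z ^ 2 + y := by ext z; rw [hqf, sub_add_cancel]
    have hq' := (hq.differentiableAt (isOpen_ball.mem_nhds h0)).hasDerivAt
    simpa [hf_eq] using ((hq'.fun_pow 2).add_const y).deriv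
  have hle := norm_deriv_zero_le_of_add_ne_zero hq hqinj (add_ne_zero_of_injOn_sq hsqinj hq0)
  calc ‖deriv f 0‖ = 2 * ‖q 0‖ * ‖deriv q 0‖ := by simp [hderiv]
    _ ≤ 2 * ‖q 0‖ * (2 * ‖q 0‖) := by gcongr
    _ = 4 * ‖q 0 ^ 2‖ := by rw [norm_pow]; ring
    _ = 4 * dist (f 0) y := by rw [hqf, dist_eq_norm]

end KoebeQuarter

end

/-- For a nonempty proper open simply connected domain `D ⊊ ℂ`, a point
`w ∈ D`, and a conformal (holomorphic bijective) map `f : 𝔻 → D` with `f 0 = w` and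
`f' 0 = c > 0` (so `c = CR(w, D)` is the conformal radius), we have
`dist(w, ∂D) ≤ c ≤ min (4 dist(w, ∂D)) (rad(w, D))`. -/
theorem cle_gasket_stmt_0
    (D : Set ℂ) (hD_open : IsOpen D) (hD_ne : D.Nonempty) (hD_proper : D ≠ Set.univ)
    (hD_sc : SimplyConnectedSpace D)
    (w : ℂ) (hw : w ∈ D)
    (f : ℂ → ℂ) (hf_holo : DifferentiableOn ℂ f (ball (0 : ℂ) 1))
    (hf_bij : BijOn f (ball (0 : ℂ) 1) D)
    (hf0 : f 0 = w)
    (c : ℝ) (hc : 0 < c) (hf'0 : deriv f 0 = (c : ℂ)) :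
    Metric.infDist w Dᶜ ≤ c ∧
    c ≤ 4 * Metric.infDist w Dᶜ ∧
    ∀ r : ℝ, 0 < r → D ⊆ ball w r → c ≤ r := by
  have hnorm : ‖deriv f 0‖ = c := by rw [hf'0, Complex.norm_of_nonneg hc.le]
  subst hf0
  rw [← hnorm]
  refine ⟨?_, ?_, fun r _ hDr ↦ ?_⟩
  · rw [← one_mul ‖deriv f 0‖]
    refine le_mul_norm_deriv_of_ball_subset_image one_pos hf_holo hf_bij.injOn ?_
    exact ball_infDist_compl_subset.trans_eq hf_bij.image_eq.symm
  · rw [← div_le_iff₀' four_pos, le_infDist (nonempty_compl.2 hD_proper)]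
    intro y hy
    rw [div_le_iff₀' four_pos]
    exact norm_deriv_zero_le_four_mul_dist hf_holo hf_bij.injOn (by rwa [hf_bij.image_eq])
  · simpa using Complex.norm_deriv_le_div_of_mapsTo_ball hf_holo
      (fun z hz ↦ ball_subset_closedBall (hDr (hf_bij.mapsTo hz))) one_pos
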